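/- Let A be a unital C*-algebra, J ⊆ A a closed two-sided ideal, and X ⊆ A an operator system. Then the C*-algebra B(X,J) generated by S(X,J) inside M₂(A) consists precisely of the elements [[a, b],[c, d]] with a ∈ C*(X) + J, b ∈ J, c ∈ J and d ∈ J + ℂ1. In particular, B(X,J) contains the closed two-sided ideal M₂(J). -/

import Mathlib

noncomputable section

namespace ArvesonCounterexample

variable (A : Type*) [CStarAlgebra A]

/-- The C*-subalgebra of `A` generated by a subset `X`. -/
def cstarGen (X : Set A) : StarSubalgebra ℂ A :=
  (StarAlgebra.adjoin ℂ X).topologicalClosure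

/-- The set `J + ℂ·1`. -/
def unitize (J : Set A) : Set A :=
  {d | ∃ j ∈ J, ∃ c : ℂ, d = j + c • (1 : A)}

/-- The operator system `S(X,J)` inside `M₂(A)`, consisting of the matrices
`[[x, j], [k, b]]` with `x ∈ X`, `j, k ∈ J` and `b ∈ J + ℂ1`. -/
def opSys (X J : Set A) : Set (Matrix (Fin 2) (Fin 2) A) :=
  {m | m 0 0 ∈ X ∧ m 0 1 ∈ J ∧ m 1 0 ∈ J ∧ m 1 1 ∈ unitize A J}

/-- The C*-algebra `B(X,J)` generated by `S(X,J)` inside `M₂(A)`. -/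
def calg (X J : Set A) : StarSubalgebra ℂ (Matrix (Fin 2) (Fin 2) A) :=
  (StarAlgebra.adjoin ℂ (opSys A X J)).topologicalClosure

/-- The set `C*(X) + J`. -/
def cstarPlusSet (X J : Set A) : Set A :=
  {a | ∃ x ∈ cstarGen A X, ∃ j ∈ J, a = x + j}

/-- `J` is a closed two-sided ideal of `A`. -/
structure IsClosedTwoSidedIdeal (J : Set A) : Prop where
  zero_mem : (0 : A) ∈ J
  add_mem : ∀ x ∈ J, ∀ y ∈ J, x + y ∈ J
  mul_mem_left : ∀ (a : A), ∀ j ∈ J, a * j ∈ J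
  mul_mem_right : ∀ (a : A), ∀ j ∈ J, j * a ∈ J
  isClosed : IsClosed J

/-- `X` is an operator system in `A`: a unital norm-closed self-adjoint subspace. -/
structure IsOperatorSystem (X : Set A) : Prop where
  one_mem : (1 : A) ∈ X
  add_mem : ∀ x ∈ X, ∀ y ∈ X, x + y ∈ X
  smul_mem : ∀ (c : ℂ), ∀ x ∈ X, c • x ∈ X
  star_mem : ∀ x ∈ X, star x ∈ X
  isClosed : IsClosed X

/-!
The matrices described by the theorem form a star algebra containing `S(X,J)`, so one inclusion
needs only that this algebra is closed, that is, that `C + J` is closed for every C⋆-subalgebra `C`.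
Let `a = c + j` with `c ∈ C`, `j ∈ J`, and let `k = f(c⋆c)` truncate the singular values of `c` at
`‖a‖`, so that `‖c * k‖ ≤ ‖a‖`. Continuous functional calculus respects congruence modulo `J` and
`f = 1` on the spectrum of `a⋆a`, so `k ≡ 1` and `c * k ≡ a` modulo `J`. Hence every element of
`C + J` splits with bounds on both summands, and a sum of complete subgroups with such bounds is
closed. The same truncation shows that `J` is self-adjoint and that every `j ∈ J` is a limit of
products `j * e` with `e ∈ J`.

Conversely, differences of elements of `S(X,J)` produce the diagonal matrix units, so `B(X,J)`
contains each entry of its elements placed alone in a matrix. The upper left corner of `B(X,J)` is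
then a C⋆-algebra containing `X`, hence `C*(X)`, and it contains `J` because
`e₁₁(j * e) = e₁₂(j) * e₂₁(e)`.
-/

variable {A}

section BoundedDecomposition

variable {E : Type*} [NormedAddCommGroup E]

lemma isClosed_sup_of_exists_norm_le {M N : AddSubgroup E} [CompleteSpace M] [CompleteSpace N]
    {C : ℝ} (h : ∀ a ∈ M ⊔ N, ∃ x ∈ M, a - x ∈ N ∧ ‖x‖ ≤ C * ‖a‖) :
    IsClosed ((M ⊔ N : AddSubgroup E) : Set E) := by
  let f : NormedAddGroupHom (M × N) E :=
    (M.subtype.coprod N.subtype).mkNormedAddGroupHom 2 fun p => by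
      calc ‖(p.1 : E) + p.2‖ ≤ ‖p.1‖ + ‖p.2‖ := norm_add_le _ _
        _ ≤ ‖p‖ + ‖p‖ := add_le_add (norm_fst_le p) (norm_snd_le p)
        _ = 2 * ‖p‖ := (two_mul _).symm
  have hf : f.SurjectiveOnWith (M ⊔ N) (|C| + 1) := by
    intro a ha
    obtain ⟨x, hxM, hxN, hx⟩ := h a ha
    have hxC : ‖x‖ ≤ |C| * ‖a‖ := hx.trans (by gcongr; exact le_abs_self C)
    refine ⟨(⟨x, hxM⟩, ⟨a - x, hxN⟩), add_sub_cancel x a, max_le ?_ ?_⟩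
    · change ‖x‖ ≤ _
      linarith [norm_nonneg a]
    · change ‖a - x‖ ≤ _
      linarith [norm_sub_le a x]
  refine isClosed_of_closure_subset fun a ha => ?_
  obtain ⟨⟨x, y⟩, rfl, -⟩ := controlled_closure_of_complete (by positivity) one_pos hf a ha
  exact AddSubgroup.add_mem_sup x.2 y.2

end BoundedDecomposition

section FunctionalCalculus

lemma abs_le_norm_of_mem_spectrum {a : A} (ha : IsSelfAdjoint a) {t : ℝ}
    (ht : t ∈ spectrum ℝ a) : |t| ≤ ‖a‖ := by
  simpa only [cfc_id' ℝ a, Real.norm_eq_abs] using norm_apply_le_norm_cfc (fun t : ℝ => t) a ht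

lemma exists_polynomial_norm_cfc_sub_aeval_le {f : ℝ → ℝ} (hf : Continuous f) (R : ℝ) {ε : ℝ}
    (hε : 0 < ε) :
    ∃ p : Polynomial ℝ, ∀ a : A, IsSelfAdjoint a → ‖a‖ ≤ R → ‖cfc f a - p.aeval a‖ ≤ ε := by
  obtain ⟨p, hp⟩ := exists_polynomial_near_of_continuousOn (-R) R f hf.continuousOn ε hε
  refine ⟨p, fun a ha haR => ?_⟩
  rw [← cfc_polynomial p a, ← cfc_sub f p.eval a]
  refine norm_cfc_le hε.le fun x hx => ?_
  rw [norm_sub_rev]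
  exact (hp x (abs_le.mp ((abs_le_norm_of_mem_spectrum ha hx).trans haR))).le

/-- The function equal to `1` on `[0, r²]` and to `r / √t` beyond, so that
`c * cfc (cutoff r) (star c * c)` is `c` with its singular values truncated at `r`. -/
def cutoff (r t : ℝ) : ℝ := r / max r (Real.sqrt t)

lemma continuous_cutoff {r : ℝ} (hr : 0 < r) : Continuous (cutoff r) :=
  continuous_const.div (by fun_prop) fun _ => (lt_max_of_lt_left hr).ne'

lemma cutoff_eq_one {r t : ℝ} (hr : 0 < r) (ht : t ≤ r ^ 2) : cutoff r t = 1 := by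
  rw [cutoff, max_eq_left ((Real.sqrt_le_left hr.le).mpr ht), div_self hr.ne']

lemma cutoff_mul_sqrt_le {r : ℝ} (hr : 0 < r) (t : ℝ) : cutoff r t * Real.sqrt t ≤ r := by
  rw [cutoff, div_mul_eq_mul_div, div_le_iff₀ (lt_max_of_lt_left hr)]
  exact mul_le_mul_of_nonneg_left (le_max_right _ _) hr.le

lemma star_mul_self_mul_cfc {c : A} {f : ℝ → ℝ} (hf : ContinuousOn f (spectrum ℝ (star c * c))) :
    star (c * cfc f (star c * c)) * (c * cfc f (star c * c)) =
      cfc (fun t => f t * t * f t) (star c * c) := by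
  have hk : IsSelfAdjoint (cfc f (star c * c)) := cfc_predicate _ _
  rw [cfc_mul (fun t => f t * t) f _ (hf.mul continuousOn_id) hf,
    cfc_mul f (fun t => t) _ hf continuousOn_id, cfc_id' ℝ (star c * c), star_mul, hk.star_eq]
  simp only [mul_assoc]

lemma norm_mul_cfc_star_mul_self_le {c : A} {f : ℝ → ℝ} {r : ℝ} (hr : 0 ≤ r)
    (hf : ContinuousOn f (spectrum ℝ (star c * c)))
    (hfr : ∀ t ∈ spectrum ℝ (star c * c), |f t * Real.sqrt t| ≤ r) :
    ‖c * cfc f (star c * c)‖ ≤ r := by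
  refine abs_le_of_sq_le_sq' ?_ hr |>.2
  rw [sq, ← CStarRing.norm_star_mul_self, star_mul_self_mul_cfc hf]
  refine norm_cfc_le (sq_nonneg r) fun t ht => ?_
  calc |f t * t * f t| = |f t * Real.sqrt t| ^ 2 := by
        rw [← abs_pow, mul_pow, Real.sq_sqrt (spectrum_star_mul_self_nonneg t ht)]
        congr 1
        ring
    _ ≤ r ^ 2 := pow_le_pow_left₀ (abs_nonneg _) (hfr t ht) 2

lemma norm_mul_cfc_cutoff_le (c : A) {r : ℝ} (hr : 0 < r) :
    ‖c * cfc (cutoff r) (star c * c)‖ ≤ r := by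
  refine norm_mul_cfc_star_mul_self_le hr.le (continuous_cutoff hr).continuousOn fun t _ => ?_
  rw [abs_of_nonneg (by unfold cutoff; positivity)]
  exact cutoff_mul_sqrt_le hr t

lemma cfc_cutoff_star_mul_self_eq_one {d : A} {r : ℝ} (hr : 0 < r) (hd : ‖d‖ ≤ r) :
    cfc (cutoff r) (star d * d) = 1 := by
  rw [← cfc_const_one ℝ (star d * d)]
  refine cfc_congr fun t ht => cutoff_eq_one hr ?_
  calc t ≤ |t| := le_abs_self t
    _ ≤ ‖star d * d‖ := abs_le_norm_of_mem_spectrum (.star_mul_self d) ht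
    _ = ‖d‖ * ‖d‖ := CStarRing.norm_star_mul_self
    _ ≤ r ^ 2 := by rw [sq]; gcongr

end FunctionalCalculus

section ClosedIdeal

lemma aeval_sub_aeval_mem {R B : Type*} [CommSemiring R] [Ring B] [Algebra R B] {I : Ideal B}
    [I.IsTwoSided] {a b : B} (hab : a - b ∈ I) (p : Polynomial R) : p.aeval a - p.aeval b ∈ I := by
  rw [← Ideal.Quotient.mk_eq_mk_iff_sub_mem] at hab ⊢
  change Ideal.Quotient.mkₐ R I (p.aeval a) = Ideal.Quotient.mkₐ R I (p.aeval b)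
  rw [← Polynomial.aeval_algHom_apply, ← Polynomial.aeval_algHom_apply]
  exact congrArg (Polynomial.aeval · p) hab

variable {I : Ideal A} [I.IsTwoSided]

lemma cfc_sub_cfc_mem (hI : IsClosed (I : Set A)) {a b : A} (ha : IsSelfAdjoint a)
    (hb : IsSelfAdjoint b) (hab : a - b ∈ I) {f : ℝ → ℝ} (hf : Continuous f) :
    cfc f a - cfc f b ∈ I := by
  refine hI.closure_subset (Metric.mem_closure_iff.mpr fun ε hε => ?_)
  obtain ⟨p, hp⟩ := exists_polynomial_norm_cfc_sub_aeval_le (A := A) hf (max ‖a‖ ‖b‖)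
    (ε := ε / 3) (by positivity)
  refine ⟨_, aeval_sub_aeval_mem hab p, ?_⟩
  rw [dist_eq_norm, sub_sub_sub_comm]
  calc ‖(cfc f a - p.aeval a) - (cfc f b - p.aeval b)‖
      ≤ ε / 3 + ε / 3 := (norm_sub_le _ _).trans
        (add_le_add (hp a ha (le_max_left _ _)) (hp b hb (le_max_right _ _)))
    _ < ε := by linarith

lemma one_sub_cfc_cutoff_mem (hI : IsClosed (I : Set A)) {c d : A}
    (hcd : star d * d - star c * c ∈ I) {r : ℝ} (hr : 0 < r) (hd : ‖d‖ ≤ r) :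
    1 - cfc (cutoff r) (star c * c) ∈ I := by
  rw [← cfc_cutoff_star_mul_self_eq_one hr hd]
  exact cfc_sub_cfc_mem hI (.star_mul_self d) (.star_mul_self c) hcd (continuous_cutoff hr)

lemma mem_closure_mul_left_image (hI : IsClosed (I : Set A)) {c : A} (hc : star c * c ∈ I) :
    c ∈ closure ((c * ·) '' (I : Set A)) := by
  refine Metric.mem_closure_iff.mpr fun ε hε => ?_
  have he : 1 - cfc (cutoff (ε / 2)) (star c * c) ∈ I :=
    one_sub_cfc_cutoff_mem hI (d := 0) (by simpa using I.neg_mem hc) (half_pos hε)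
      (by simpa using (half_pos hε).le)
  refine ⟨_, ⟨_, he, rfl⟩, ?_⟩
  simp only [dist_eq_norm, mul_sub, mul_one, sub_sub_cancel]
  exact (norm_mul_cfc_cutoff_le c (half_pos hε)).trans_lt (half_lt_self hε)

lemma mem_of_star_mul_self_mem (hI : IsClosed (I : Set A)) {c : A} (hc : star c * c ∈ I) :
    c ∈ I :=
  closure_minimal (Set.image_subset_iff.mpr fun _ he => I.mul_mem_left c he) hI
    (mem_closure_mul_left_image hI hc)

lemma star_mem_of_isClosed (hI : IsClosed (I : Set A)) : ∀ a ∈ I, star a ∈ I := fun a ha =>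
  mem_of_star_mul_self_mem hI (by simpa using I.mul_mem_right (star a) ha)

lemma star_mul_self_sub_star_mul_self_mem (hI : IsClosed (I : Set A)) {c d : A}
    (hcd : d - c ∈ I) : star d * d - star c * c ∈ I := by
  have hsplit : star d * d - star c * c = star (d - c) * d + star c * (d - c) := by
    rw [star_sub]
    noncomm_ring
  rw [hsplit]
  exact I.add_mem (I.mul_mem_right _ (star_mem_of_isClosed hI _ hcd)) (I.mul_mem_left _ hcd)

lemma exists_mem_sub_mem_norm_le (hI : IsClosed (I : Set A)) {S : StarSubalgebra ℂ A}
    (hS : IsClosed (S : Set A)) {a c : A} (hc : c ∈ S) (hac : a - c ∈ I) :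
    ∃ x ∈ S, a - x ∈ I ∧ ‖x‖ ≤ ‖a‖ := by
  rcases eq_or_ne a 0 with rfl | ha
  · exact ⟨0, zero_mem S, by simp, le_rfl⟩
  have hr : 0 < ‖a‖ := norm_pos_iff.mpr ha
  set k := cfc (cutoff ‖a‖) (star c * c)
  have hkS : k ∈ S := cfc_mem (𝕜' := ℂ) (hs := hS) _ (mul_mem (star_mem hc) hc)
  have hkI : 1 - k ∈ I :=
    one_sub_cfc_cutoff_mem hI (star_mul_self_sub_star_mul_self_mem hI hac) hr le_rfl
  have hsplit : a - c * k = (a - c) + c * (1 - k) := by noncomm_ring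
  refine ⟨c * k, mul_mem hc hkS, ?_, norm_mul_cfc_cutoff_le c hr⟩
  rw [hsplit]
  exact I.add_mem hac (I.mul_mem_left c hkI)

end ClosedIdeal

section AddIdeal

open scoped Pointwise

/-- The star subalgebra `S + I`, for a self-adjoint two-sided ideal `I`. -/
def addIdeal {R B : Type*} [CommSemiring R] [StarRing R] [Semiring B] [StarRing B] [Algebra R B]
    [StarModule R B] (S : StarSubalgebra R B) (I : Ideal B) [I.IsTwoSided]
    (hI : ∀ a ∈ I, star a ∈ I) : StarSubalgebra R B where
  carrier := (S : Set B) + (I : Set B)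
  add_mem' := by
    rintro _ _ ⟨x, hx, i, hi, rfl⟩ ⟨y, hy, j, hj, rfl⟩
    exact ⟨x + y, add_mem hx hy, i + j, I.add_mem hi hj, add_add_add_comm x y i j⟩
  mul_mem' := by
    rintro _ _ ⟨x, hx, i, hi, rfl⟩ ⟨y, hy, j, hj, rfl⟩
    refine ⟨x * y, mul_mem hx hy, x * j + i * (y + j),
      I.add_mem (I.mul_mem_left x hj) (I.mul_mem_right _ hi), ?_⟩
    simp only [add_mul, mul_add]
    abel
  algebraMap_mem' r := ⟨_, algebraMap_mem S r, 0, I.zero_mem, add_zero _⟩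
  star_mem' := by
    rintro _ ⟨x, hx, i, hi, rfl⟩
    exact ⟨star x, star_mem hx, star i, hI i hi, (star_add x i).symm⟩

lemma isClosed_addIdeal {S : StarSubalgebra ℂ A} (hS : IsClosed (S : Set A))
    {I : Ideal A} [I.IsTwoSided] (hI : IsClosed (I : Set A)) :
    IsClosed (addIdeal S I (star_mem_of_isClosed hI) : Set A) := by
  let M : AddSubgroup A := S.toSubalgebra.toSubmodule.toAddSubgroup
  let N : AddSubgroup A := I.toAddSubgroup
  have : CompleteSpace M := hS.completeSpace_coe
  have : CompleteSpace N := hI.completeSpace_coe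
  change IsClosed ((M : Set A) + (N : Set A))
  rw [← AddSubgroup.add_normal]
  refine isClosed_sup_of_exists_norm_le (C := 1) fun a ha => ?_
  obtain ⟨c, hc, i, hi, rfl⟩ := AddSubgroup.mem_sup.mp ha
  rw [one_mul]
  exact exists_mem_sub_mem_norm_le hI hS hc (by rwa [add_sub_cancel_left])

lemma mem_addIdeal_of_mem {R B : Type*} [CommSemiring R] [StarRing R] [Semiring B] [StarRing B]
    [Algebra R B] [StarModule R B] {S : StarSubalgebra R B} {I : Ideal B} [I.IsTwoSided]
    (hI : ∀ a ∈ I, star a ∈ I) {a : B} (ha : a ∈ I) : a ∈ addIdeal S I hI :=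
  ⟨0, zero_mem S, a, ha, zero_add a⟩

lemma mem_addIdeal_cstarGen_iff {X : Set A} {I : Ideal A} [I.IsTwoSided]
    {hI : ∀ a ∈ I, star a ∈ I} {a : A} :
    a ∈ addIdeal (cstarGen A X) I hI ↔ a ∈ cstarPlusSet A X I := by
  change a ∈ (cstarGen A X : Set A) + (I : Set A) ↔ _
  simp only [Set.mem_add, cstarPlusSet, Set.mem_ofPred_eq, SetLike.mem_coe, eq_comm]

lemma mem_addIdeal_bot_iff {I : Ideal A} [I.IsTwoSided] {hI : ∀ a ∈ I, star a ∈ I} {a : A} :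
    a ∈ addIdeal (⊥ : StarSubalgebra ℂ A) I hI ↔ a ∈ unitize A I := by
  constructor
  · rintro ⟨x, hx, i, hi, rfl⟩
    obtain ⟨c, rfl⟩ := StarSubalgebra.mem_bot.mp hx
    exact ⟨i, hi, c, by rw [← Algebra.algebraMap_eq_smul_one, add_comm]⟩
  · rintro ⟨i, hi, c, rfl⟩
    rw [← Algebra.algebraMap_eq_smul_one, add_comm]
    exact ⟨_, algebraMap_mem ⊥ c, i, hi, rfl⟩

lemma isClosed_bot_starSubalgebra : IsClosed ((⊥ : StarSubalgebra ℂ A) : Set A) := by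
  have hspan : ((⊥ : StarSubalgebra ℂ A) : Set A) = Submodule.span ℂ {(1 : A)} := by
    ext a
    simp only [SetLike.mem_coe, StarSubalgebra.mem_bot, Set.mem_range, Submodule.mem_span_singleton,
      Algebra.algebraMap_eq_smul_one]
  rw [hspan]
  exact Submodule.closed_of_finiteDimensional _

end AddIdeal

section Matrix

variable {n R B : Type*} [DecidableEq n]

lemma mem_of_forall_single_apply_mem {σ : Type*} [Finite n] [AddCommMonoid B]
    [SetLike σ (Matrix n n B)] [AddSubmonoidClass σ (Matrix n n B)] {s : σ} {m : Matrix n n B}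
    (h : ∀ i j, Matrix.single i j (m i j) ∈ s) : m ∈ s := by
  cases nonempty_fintype n
  rw [Matrix.matrix_eq_sum_single m]
  exact sum_mem fun i _ => sum_mem fun j _ => h i j

variable [Fintype n]

lemma single_apply_mem {σ : Type*} [Semiring B] [SetLike σ (Matrix n n B)]
    [MulMemClass σ (Matrix n n B)] {s : σ} (hs : ∀ i, Matrix.single i i 1 ∈ s) {m : Matrix n n B}
    (hm : m ∈ s) (i j : n) : Matrix.single i j (m i j) ∈ s := by
  simpa only [Matrix.single_mul_mul_single, one_mul, mul_one] using
    mul_mem (mul_mem (hs i) hm) (hs j)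

variable [CommSemiring R] [StarRing R] [Semiring B] [StarRing B] [Algebra R B] [StarModule R B]

/-- The star algebra of matrices whose `i`-th diagonal entry lies in `P i` and whose off-diagonal
entries lie in the self-adjoint ideal `I`, which is contained in every `P i`. -/
def diagonalModIdeal (P : n → StarSubalgebra R B) (I : Ideal B) [I.IsTwoSided]
    (hI : ∀ a ∈ I, star a ∈ I) (hIP : ∀ i, ∀ a ∈ I, a ∈ P i) :
    StarSubalgebra R (Matrix n n B) where
  carrier := {m | (∀ i, m i i ∈ P i) ∧ ∀ i j, i ≠ j → m i j ∈ I}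
  add_mem' hm hm' :=
    ⟨fun i => add_mem (hm.1 i) (hm'.1 i), fun i j hij => I.add_mem (hm.2 i j hij) (hm'.2 i j hij)⟩
  mul_mem' := by
    rintro m m' ⟨hd, ho⟩ ⟨hd', ho'⟩
    refine ⟨fun i => sum_mem fun k _ => ?_, fun i j hij => sum_mem fun k _ => ?_⟩
    · rcases eq_or_ne i k with rfl | hik
      · exact mul_mem (hd i) (hd' i)
      · exact hIP i _ (I.mul_mem_right _ (ho i k hik))
    · rcases eq_or_ne i k with rfl | hik
      · exact I.mul_mem_left _ (ho' i j hij)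
      · exact I.mul_mem_right _ (ho i k hik)
  algebraMap_mem' r := by
    refine ⟨fun i => ?_, fun i j hij => ?_⟩
    · simp only [Matrix.algebraMap_matrix_apply, if_true, algebraMap_mem]
    · simp only [Matrix.algebraMap_matrix_apply, if_neg hij, I.zero_mem]
  star_mem' hm := ⟨fun i => star_mem (hm.1 i), fun i j hij => hI _ (hm.2 j i hij.symm)⟩

lemma isClosed_diagonalModIdeal [TopologicalSpace B] {P : n → StarSubalgebra R B} {I : Ideal B}
    [I.IsTwoSided] {hI : ∀ a ∈ I, star a ∈ I} {hIP : ∀ i, ∀ a ∈ I, a ∈ P i}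
    (hP : ∀ i, IsClosed (P i : Set B)) (hI' : IsClosed (I : Set B)) :
    IsClosed (diagonalModIdeal P I hI hIP : Set (Matrix n n B)) := by
  have hentry (i j : n) : Continuous fun m : Matrix n n B => m i j :=
    continuous_id.matrix_elem i j
  refine IsClosed.inter (s₁ := {m : Matrix n n B | ∀ i, m i i ∈ P i})
    (s₂ := {m : Matrix n n B | ∀ i j, i ≠ j → m i j ∈ I}) ?_ ?_
  · simp only [Set.ofPred_forall]
    exact isClosed_iInter fun i => (hP i).preimage (hentry i i)
  · simp only [Set.ofPred_forall]
    exact isClosed_iInter fun i => isClosed_iInter fun j => isClosed_iInter fun _ =>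
      hI'.preimage (hentry i j)

/-- The `i`-th diagonal corner of a star algebra of matrices containing the `i`-th diagonal matrix
unit, as a star subalgebra of the coefficient algebra. -/
def corner (S : StarSubalgebra R (Matrix n n B)) (i : n) (hi : Matrix.single i i 1 ∈ S) :
    StarSubalgebra R B where
  carrier := {a | Matrix.single i i a ∈ S}
  add_mem' {a b} ha hb := by
    change Matrix.single i i (a + b) ∈ S
    rw [Matrix.single_add]
    exact add_mem ha hb
  mul_mem' {a b} ha hb := by
    change Matrix.single i i (a * b) ∈ S
    rw [← Matrix.single_mul_single_same a i i i b]
    exact mul_mem ha hb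
  algebraMap_mem' r := by
    change Matrix.single i i (algebraMap R B r) ∈ S
    rw [Algebra.algebraMap_eq_smul_one, ← Matrix.smul_single]
    exact S.smul_mem hi r
  star_mem' {a} ha := by
    change Matrix.single i i (star a) ∈ S
    rw [← Matrix.conjTranspose_single]
    exact star_mem ha

lemma isClosed_corner [TopologicalSpace B] {S : StarSubalgebra R (Matrix n n B)} {i : n}
    {hi : Matrix.single i i 1 ∈ S} (hS : IsClosed (S : Set (Matrix n n B))) :
    IsClosed (corner S i hi : Set B) :=
  hS.preimage <| continuous_matrix fun k l => by
    simp only [Matrix.single_apply]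
    exact continuous_id.if_const _ continuous_const

lemma mem_corner_of_mem_ideal {S : StarSubalgebra ℂ (Matrix n n A)} {i k : n}
    {hi : Matrix.single i i 1 ∈ S} (hS : IsClosed (S : Set (Matrix n n A))) {I : Ideal A}
    [I.IsTwoSided] (hI : IsClosed (I : Set A)) (hik : ∀ a ∈ I, Matrix.single i k a ∈ S)
    (hki : ∀ a ∈ I, Matrix.single k i a ∈ S) {a : A} (ha : a ∈ I) : a ∈ corner S i hi := by
  refine closure_minimal ?_ (isClosed_corner hS)
    (mem_closure_mul_left_image hI (I.mul_mem_left (star a) ha))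
  rintro _ ⟨e, he, rfl⟩
  change Matrix.single i i (a * e) ∈ S
  rw [← Matrix.single_mul_single_same a i k i e]
  exact mul_mem (hik a ha) (hki e he)

end Matrix

section GeneratedAlgebra

variable {X : Set A} {I : Ideal A}

lemma subset_cstarGen : X ⊆ cstarGen A X :=
  (StarAlgebra.subset_adjoin ℂ X).trans (StarSubalgebra.le_topologicalClosure _)

lemma opSys_subset_calg {J : Set A} : opSys A X J ⊆ calg A X J :=
  (StarAlgebra.subset_adjoin ℂ _).trans (StarSubalgebra.le_topologicalClosure _)

lemma cstarGen_le {S : StarSubalgebra ℂ A} (hS : IsClosed (S : Set A)) (hXS : X ⊆ S) :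
    cstarGen A X ≤ S :=
  StarSubalgebra.topologicalClosure_minimal (StarAlgebra.adjoin_le_iff.mpr hXS) hS

lemma isClosed_calg {J : Set A} : IsClosed (calg A X J : Set (Matrix (Fin 2) (Fin 2) A)) :=
  StarSubalgebra.isClosed_topologicalClosure _

lemma mem_unitize_of_mem {a : A} (ha : a ∈ I) : a ∈ unitize A I := ⟨a, ha, 0, by simp⟩

lemma zero_mem_unitize : (0 : A) ∈ unitize A I := mem_unitize_of_mem I.zero_mem

lemma one_mem_unitize : (1 : A) ∈ unitize A I := ⟨0, I.zero_mem, 1, by simp⟩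

lemma single_one_one_mem_calg (hX : X.Nonempty) {d : A} (hd : d ∈ unitize A I) :
    Matrix.single 1 1 d ∈ calg A X I := by
  obtain ⟨x, hx⟩ := hX
  have hdiag (b : A) (hb : b ∈ unitize A I) : !![x, 0; 0, b] ∈ calg A X I :=
    opSys_subset_calg ⟨hx, I.zero_mem, I.zero_mem, hb⟩
  have hdiff : Matrix.single 1 1 d = !![x, 0; 0, d] - !![x, 0; 0, 0] := by
    ext i j
    fin_cases i <;> fin_cases j <;> simp
  rw [hdiff]
  exact sub_mem (hdiag d hd) (hdiag 0 zero_mem_unitize)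

lemma single_self_one_mem_calg (hX : X.Nonempty) (i : Fin 2) :
    Matrix.single i i 1 ∈ calg A X I := by
  have hone : Matrix.single 1 1 1 ∈ calg A X I := single_one_one_mem_calg hX one_mem_unitize
  have hcompl : (Matrix.single 0 0 1 : Matrix (Fin 2) (Fin 2) A) = 1 - Matrix.single 1 1 1 := by
    ext i j
    fin_cases i <;> fin_cases j <;> simp
  fin_cases i
  · exact hcompl ▸ sub_mem (one_mem _) hone
  · exact hone

lemma single_apply_mem_calg {m : Matrix (Fin 2) (Fin 2) A} (hm : m ∈ opSys A X I) (i j : Fin 2) :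
    Matrix.single i j (m i j) ∈ calg A X I :=
  single_apply_mem (single_self_one_mem_calg ⟨_, hm.1⟩) (opSys_subset_calg hm) i j

lemma single_zero_one_mem_calg (hX : X.Nonempty) {a : A} (ha : a ∈ I) :
    Matrix.single 0 1 a ∈ calg A X I :=
  single_apply_mem_calg (m := !![hX.some, a; 0, 0])
    ⟨hX.some_mem, ha, I.zero_mem, zero_mem_unitize⟩ 0 1

lemma single_one_zero_mem_calg (hX : X.Nonempty) {a : A} (ha : a ∈ I) :
    Matrix.single 1 0 a ∈ calg A X I :=
  single_apply_mem_calg (m := !![hX.some, 0; a, 0])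
    ⟨hX.some_mem, I.zero_mem, ha, zero_mem_unitize⟩ 1 0

lemma cstarGen_le_corner_calg (hX : X.Nonempty) :
    cstarGen A X ≤ corner (calg A X I) 0 (single_self_one_mem_calg hX 0) :=
  cstarGen_le (isClosed_corner isClosed_calg) fun x hx =>
    single_apply_mem_calg (m := !![x, 0; 0, 0]) ⟨hx, I.zero_mem, I.zero_mem, zero_mem_unitize⟩ 0 0

variable [I.IsTwoSided]

lemma single_zero_zero_mem_calg (hX : X.Nonempty) (hI : IsClosed (I : Set A)) {a : A}
    (ha : a ∈ cstarPlusSet A X I) : Matrix.single 0 0 a ∈ calg A X I := by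
  obtain ⟨x, hx, j, hj, rfl⟩ := ha
  have hjB : j ∈ corner (calg A X I) 0 (single_self_one_mem_calg hX 0) :=
    mem_corner_of_mem_ideal isClosed_calg hI (fun _ => single_zero_one_mem_calg hX)
      (fun _ => single_one_zero_mem_calg hX) hj
  exact add_mem (cstarGen_le_corner_calg hX hx) hjB

variable (X I) in
/-- The star algebra of matrices `[[a, b], [c, d]]` with `a ∈ C*(X) + I`, `b, c ∈ I` and
`d ∈ I + ℂ1`, which turns out to be `B(X,I)`. -/
def blockAlgebra (hI : ∀ a ∈ I, star a ∈ I) : StarSubalgebra ℂ (Matrix (Fin 2) (Fin 2) A) :=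
  diagonalModIdeal ![addIdeal (cstarGen A X) I hI, addIdeal ⊥ I hI] I hI <|
    Fin.forall_fin_two.mpr ⟨fun _ => mem_addIdeal_of_mem hI, fun _ => mem_addIdeal_of_mem hI⟩

lemma mem_blockAlgebra_iff {hI : ∀ a ∈ I, star a ∈ I} {m : Matrix (Fin 2) (Fin 2) A} :
    m ∈ blockAlgebra X I hI ↔
      m 0 0 ∈ cstarPlusSet A X I ∧ m 0 1 ∈ I ∧ m 1 0 ∈ I ∧ m 1 1 ∈ unitize A I := by
  rw [← mem_addIdeal_cstarGen_iff (hI := hI), ← mem_addIdeal_bot_iff (hI := hI)]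
  change (∀ i, m i i ∈ ![addIdeal (cstarGen A X) I hI, addIdeal ⊥ I hI] i) ∧
    (∀ i j, i ≠ j → m i j ∈ I) ↔ _
  simp only [Fin.forall_fin_two, Matrix.cons_val_zero, Matrix.cons_val_one, ne_eq,
    not_true_eq_false, false_implies, zero_ne_one, one_ne_zero, not_false_eq_true, true_implies,
    true_and, and_true]
  tauto

lemma isClosed_blockAlgebra (hI : IsClosed (I : Set A)) :
    IsClosed (blockAlgebra X I (star_mem_of_isClosed hI) : Set (Matrix (Fin 2) (Fin 2) A)) :=
  have hC : IsClosed (cstarGen A X : Set A) := StarSubalgebra.isClosed_topologicalClosure _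
  isClosed_diagonalModIdeal
    (P := ![addIdeal (cstarGen A X) I _, addIdeal ⊥ I _])
    (Fin.forall_fin_two.mpr
      ⟨isClosed_addIdeal hC hI, isClosed_addIdeal isClosed_bot_starSubalgebra hI⟩) hI

lemma calg_le_blockAlgebra (hI : IsClosed (I : Set A)) :
    calg A X I ≤ blockAlgebra X I (star_mem_of_isClosed hI) := by
  refine StarSubalgebra.topologicalClosure_minimal (StarAlgebra.adjoin_le_iff.mpr ?_)
    (isClosed_blockAlgebra hI)
  rintro m ⟨h₀₀, h₀₁, h₁₀, h₁₁⟩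
  exact mem_blockAlgebra_iff.mpr
    ⟨⟨m 0 0, subset_cstarGen h₀₀, 0, I.zero_mem, (add_zero _).symm⟩, h₀₁, h₁₀, h₁₁⟩

lemma blockAlgebra_le_calg (hX : X.Nonempty) (hI : IsClosed (I : Set A)) :
    blockAlgebra X I (star_mem_of_isClosed hI) ≤ calg A X I := by
  intro m hm
  obtain ⟨h₀₀, h₀₁, h₁₀, h₁₁⟩ := mem_blockAlgebra_iff.mp hm
  refine mem_of_forall_single_apply_mem ?_
  simp only [Fin.forall_fin_two]
  exact ⟨⟨single_zero_zero_mem_calg hX hI h₀₀, single_zero_one_mem_calg hX h₀₁⟩,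
    single_one_zero_mem_calg hX h₁₀, single_one_one_mem_calg hX h₁₁⟩

theorem calg_eq_blockAlgebra (hX : X.Nonempty) (hI : IsClosed (I : Set A)) :
    calg A X I = blockAlgebra X I (star_mem_of_isClosed hI) :=
  le_antisymm (calg_le_blockAlgebra hI) (blockAlgebra_le_calg hX hI)

lemma mem_blockAlgebra_of_forall_mem {hI : ∀ a ∈ I, star a ∈ I}
    {m : Matrix (Fin 2) (Fin 2) A} (hm : ∀ i j, m i j ∈ I) : m ∈ blockAlgebra X I hI :=
  mem_blockAlgebra_iff.mpr
    ⟨⟨0, zero_mem _, m 0 0, hm 0 0, (zero_add _).symm⟩, hm 0 1, hm 1 0, mem_unitize_of_mem (hm 1 1)⟩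

lemma IsClosedTwoSidedIdeal.exists_ideal {J : Set A} (hJ : IsClosedTwoSidedIdeal A J) :
    ∃ I : Ideal A, I.IsTwoSided ∧ IsClosed (I : Set A) ∧ (I : Set A) = J :=
  ⟨{ carrier := J
     zero_mem' := hJ.zero_mem
     add_mem' := fun ha hb => hJ.add_mem _ ha _ hb
     smul_mem' := hJ.mul_mem_left },
    ⟨fun b ha => hJ.mul_mem_right b _ ha⟩, hJ.isClosed, rfl⟩

end GeneratedAlgebra

variable (A)

theorem stmt0_general (X J : Set A) (hX : X.Nonempty) (hJ : IsClosedTwoSidedIdeal A J) :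
    ((calg A X J : Set (Matrix (Fin 2) (Fin 2) A)) =
      {m | m 0 0 ∈ cstarPlusSet A X J ∧ m 0 1 ∈ J ∧ m 1 0 ∈ J ∧ m 1 1 ∈ unitize A J}) ∧
    (∀ m : Matrix (Fin 2) (Fin 2) A, (∀ i j : Fin 2, m i j ∈ J) → m ∈ calg A X J) := by
  obtain ⟨I, _, hI, rfl⟩ := hJ.exists_ideal
  rw [calg_eq_blockAlgebra hX hI]
  exact ⟨Set.ext fun _ => mem_blockAlgebra_iff, fun _ => mem_blockAlgebra_of_forall_mem⟩

/-- Lemma 2.1: the C*-algebra `B(X,J)` generated by `S(X,J)` inside `M₂(A)`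
consists precisely of the matrices `[[a,b],[c,d]]` with `a ∈ C*(X) + J`, `b, c ∈ J` and
`d ∈ J + ℂ1`.  In particular, `B(X,J)` contains the closed two-sided ideal `M₂(J)`. -/
theorem stmt0 (X J : Set A) (hX : IsOperatorSystem A X) (hJ : IsClosedTwoSidedIdeal A J) :
    ((calg A X J : Set (Matrix (Fin 2) (Fin 2) A)) =
      {m | m 0 0 ∈ cstarPlusSet A X J ∧ m 0 1 ∈ J ∧ m 1 0 ∈ J ∧ m 1 1 ∈ unitize A J}) ∧
    (∀ m : Matrix (Fin 2) (Fin 2) A, (∀ i j : Fin 2, m i j ∈ J) → m ∈ calg A X J) :=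
  stmt0_general A X J ⟨1, hX.one_mem⟩ hJ

end ArvesonCounterexample
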